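/- Optimal linear MIMO estimator via operator calculus: let e : ℂ^N → H be a bounded operator into a Hilbert space H (the received-field map), σ̃² > 0, and Q = e* e (an N×N positive semidefinite matrix). Then the receiver V = e (σ̃²)⁻¹ (I + σ̃⁻² Q)⁻¹ : ℂ^N → H minimizes tr(E(V)) where E(V) = (I − V*e)(I − V*e)* + σ̃² V*V, and the minimum is E = (I + σ̃⁻² Q)⁻¹. -/

import Mathlib

open ContinuousLinearMap

/-!
Write `s = σ̃²` and `R = (1 + s⁻¹ Q)⁻¹`, which exists because `1 + s⁻¹ e*e` is bounded below by the
identity (`isUnit_one_add`), and which is self-adjoint. The proof completes the square around `V₀`.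
From `R (1 + s⁻¹ Q) = 1` one gets `1 - V₀* e = R`. For `V = V₀ + W` the terms of `E(V)` that are
linear in `W` are `-R e* W` and `s V₀* W = R e* W` together with their adjoints, so they cancel, and
`E(V) = R + (W* e)(W* e)* + s W* W` (`mse_add`). Taking `W = 0` gives `E(V₀) = R`; in general
`E(V) - R` is a positive operator and hence has nonnegative trace.
-/

section MSE

variable {F H : Type*} [NormedAddCommGroup F] [InnerProductSpace ℂ F] [FiniteDimensional ℂ F]
  [CompleteSpace F] [NormedAddCommGroup H] [InnerProductSpace ℂ H] [CompleteSpace H]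

/-- Invertibility of `1 + s⁻¹ e*e`: a vector `v` in its kernel has
`0 = ⟪v, (1 + s⁻¹ e*e) v⟫ = ‖v‖² + s⁻¹ ‖e v‖²`, and in finite dimension injectivity suffices. -/
lemma isUnit_one_add (e : F →L[ℂ] H) {s : ℝ} (hs : 0 < s) :
    IsUnit ((1 : F →L[ℂ] F) + ((s : ℂ)⁻¹) • (adjoint e ∘L e)) := by
  set A : F →L[ℂ] F := 1 + ((s : ℂ)⁻¹) • (adjoint e ∘L e) with hA
  have hinj : Function.Injective (A : F →ₗ[ℂ] F) := by
    rw [injective_iff_map_eq_zero]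
    intro v hv
    have h1 : inner ℂ v (A v) = ((‖v‖ ^ 2 + s⁻¹ * ‖e v‖ ^ 2 : ℝ) : ℂ) := by
      simp [hA, adjoint_inner_right, inner_self_eq_norm_sq_to_K]
    have hv' : A v = 0 := hv
    rw [hv', inner_zero_right] at h1
    have h2 : ‖v‖ ^ 2 + s⁻¹ * ‖e v‖ ^ 2 = 0 := by exact_mod_cast h1.symm
    have h3 : 0 ≤ s⁻¹ * ‖e v‖ ^ 2 := by positivity
    have h4 : ‖v‖ ^ 2 = 0 := le_antisymm (by linarith) (by positivity)
    simpa using h4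
  rw [ContinuousLinearMap.isUnit_iff_bijective]
  exact ⟨hinj, LinearMap.injective_iff_surjective.mp hinj⟩

/-- Completing the square: the MSE operator at `V₀ + W`, with `V₀ = s⁻¹ e R`. -/
lemma mse_add (e W : F →L[ℂ] H) {s : ℝ} (hs : 0 < s) (R : F →L[ℂ] F)
    (hR : R = Ring.inverse ((1 : F →L[ℂ] F) + ((s : ℂ)⁻¹) • (adjoint e ∘L e))) :
    (1 - adjoint (((s : ℂ)⁻¹) • (e ∘L R) + W) ∘L e) ∘L
        adjoint (1 - adjoint (((s : ℂ)⁻¹) • (e ∘L R) + W) ∘L e) +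
      (s : ℂ) • (adjoint (((s : ℂ)⁻¹) • (e ∘L R) + W) ∘L (((s : ℂ)⁻¹) • (e ∘L R) + W)) =
    R + ((adjoint W ∘L e) ∘L adjoint (adjoint W ∘L e) + (s : ℂ) • (adjoint W ∘L W)) := by
  have hs0 : (s : ℂ) ≠ 0 := by exact_mod_cast hs.ne'
  have hu := isUnit_one_add e hs
  set Q : F →L[ℂ] F := adjoint e ∘L e with hQ
  have hQadj : adjoint Q = Q := by simp [hQ, adjoint_comp]
  have hRA : R * (1 + ((s : ℂ)⁻¹) • Q) = 1 := by rw [hR]; exact Ring.inverse_mul_cancel _ hu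
  have hAR : (1 + ((s : ℂ)⁻¹) • Q) * R = 1 := by rw [hR]; exact Ring.mul_inverse_cancel _ hu
  have hRadj : adjoint R = R := by
    -- `R*` is a left inverse of the self-adjoint operator whose right inverse is `R`.
    have h := congrArg star hAR
    have hA : star ((1 : F →L[ℂ] F) + ((s : ℂ)⁻¹) • Q) = 1 + ((s : ℂ)⁻¹) • Q := by
      have hQs : star Q = Q := hQadj
      simp [star_add, star_smul, hQs]
    rw [star_mul, hA, star_one] at h
    exact left_inv_eq_right_inv h hAR
  set P : F →L[ℂ] F := adjoint W ∘L e with hP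
  have hPadj : adjoint P = adjoint e ∘L W := by simp [hP, adjoint_comp]
  have hV : adjoint (((s : ℂ)⁻¹) • (e ∘L R) + W) = ((s : ℂ)⁻¹) • (R ∘L adjoint e) + adjoint W := by
    rw [map_add, LinearIsometryEquiv.map_smulₛₗ, adjoint_comp, hRadj]
    simp
  have h1 : 1 - adjoint (((s : ℂ)⁻¹) • (e ∘L R) + W) ∘L e = R - P := by
    have : adjoint (((s : ℂ)⁻¹) • (e ∘L R) + W) ∘L e = ((s : ℂ)⁻¹) • (R * Q) + P := by
      rw [hV, add_comp, smul_comp]; rfl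
    rw [this, ← hRA, mul_add, mul_one, mul_smul_comm]
    abel
  have h2 : adjoint (((s : ℂ)⁻¹) • (e ∘L R) + W) ∘L (((s : ℂ)⁻¹) • (e ∘L R) + W) =
      ((s : ℂ)⁻¹) • ((R * (((s : ℂ)⁻¹) • Q)) * R) + ((s : ℂ)⁻¹) • (R * adjoint P) +
        ((s : ℂ)⁻¹) • (P * R) + adjoint W ∘L W := by
    rw [hV, hPadj, mul_smul_comm]
    simp only [add_comp, comp_add, smul_comp, comp_smul, smul_mul_assoc]
    have e1 : (R ∘L adjoint e) ∘L (e ∘L R) = R * Q * R := rfl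
    have e2 : (R ∘L adjoint e) ∘L W = R * (adjoint e ∘L W) := rfl
    have e3 : adjoint W ∘L (e ∘L R) = P * R := rfl
    rw [e1, e2, e3, smul_add]
    abel
  have h3 : R * (((s : ℂ)⁻¹) • Q) = 1 - R := by
    rw [← hRA, mul_add, mul_one]; abel
  have h4 : adjoint (R - P) = R - adjoint P := by rw [map_sub, hRadj]
  rw [h1, h2, h3, h4]
  simp only [smul_add, smul_smul, mul_inv_cancel₀ hs0, one_smul]
  change (R - P) * (R - adjoint P) + _ = R + (P * adjoint P + _)
  noncomm_ring

end MSE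



/-- Optimal linear MIMO estimator: with `Q = e*e` and `σ̃² > 0`, the receiver
`V₀ = σ̃⁻² e (I + σ̃⁻² Q)⁻¹` achieves the MSE operator `E(V₀) = (I + σ̃⁻² Q)⁻¹`,
and it minimizes the trace of `E(V) = (I − V*e)(I − V*e)* + σ̃² V*V`. -/
theorem optimal_mimo_estimator (H : Type*) [NormedAddCommGroup H]
    [InnerProductSpace ℂ H] [CompleteSpace H] (N : ℕ) (hN : 0 < N)
    (e : EuclideanSpace ℂ (Fin N) →L[ℂ] H) (σt2 : ℝ) (hσ : 0 < σt2)
    (Q : EuclideanSpace ℂ (Fin N) →L[ℂ] EuclideanSpace ℂ (Fin N))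
    (hQ : Q = ContinuousLinearMap.adjoint e ∘L e)
    (Err : (EuclideanSpace ℂ (Fin N) →L[ℂ] H) →
      (EuclideanSpace ℂ (Fin N) →L[ℂ] EuclideanSpace ℂ (Fin N)))
    (hErr : ∀ V : EuclideanSpace ℂ (Fin N) →L[ℂ] H,
      Err V = ((1 : EuclideanSpace ℂ (Fin N) →L[ℂ] EuclideanSpace ℂ (Fin N)) -
          ContinuousLinearMap.adjoint V ∘L e) ∘L
        ContinuousLinearMap.adjoint
          ((1 : EuclideanSpace ℂ (Fin N) →L[ℂ] EuclideanSpace ℂ (Fin N)) -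
            ContinuousLinearMap.adjoint V ∘L e) +
        (σt2 : ℂ) • (ContinuousLinearMap.adjoint V ∘L V))
    (V₀ : EuclideanSpace ℂ (Fin N) →L[ℂ] H)
    (hV₀ : V₀ = ((σt2 : ℂ)⁻¹) • (e ∘L Ring.inverse
      ((1 : EuclideanSpace ℂ (Fin N) →L[ℂ] EuclideanSpace ℂ (Fin N)) +
        ((σt2 : ℂ)⁻¹) • Q))) :
    Err V₀ = Ring.inverse
      ((1 : EuclideanSpace ℂ (Fin N) →L[ℂ] EuclideanSpace ℂ (Fin N)) +
        ((σt2 : ℂ)⁻¹) • Q) ∧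
    ∀ V : EuclideanSpace ℂ (Fin N) →L[ℂ] H,
      (LinearMap.trace ℂ (EuclideanSpace ℂ (Fin N)) (Err V₀ : _ →ₗ[ℂ] _)).re ≤
      (LinearMap.trace ℂ (EuclideanSpace ℂ (Fin N)) (Err V : _ →ₗ[ℂ] _)).re := by
  subst hQ
  set R := Ring.inverse ((1 : EuclideanSpace ℂ (Fin N) →L[ℂ] EuclideanSpace ℂ (Fin N)) +
    ((σt2 : ℂ)⁻¹) • (adjoint e ∘L e)) with hR
  have key : ∀ W, Err (V₀ + W) =
      R + ((adjoint W ∘L e) ∘L adjoint (adjoint W ∘L e) + (σt2 : ℂ) • (adjoint W ∘L W)) := by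
    intro W
    rw [hErr, hV₀]
    exact mse_add e W hσ R hR
  have h0 : Err V₀ = R := by simpa using key 0
  refine ⟨h0, fun V => ?_⟩
  have hV := key (V - V₀)
  rw [add_sub_cancel] at hV
  set W := V - V₀
  have hpos : ((adjoint W ∘L e) ∘L adjoint (adjoint W ∘L e) +
      (σt2 : ℂ) • (adjoint W ∘L W)).IsPositive := by
    refine (isPositive_self_comp_adjoint _).add ((isPositive_adjoint_comp_self W).smul_of_nonneg ?_)
    exact_mod_cast hσ.le
  have htr := (Complex.le_def.mp hpos.toLinearMap.trace_nonneg).1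
  rw [hV, h0, ContinuousLinearMap.toLinearMap_add, map_add, Complex.add_re]
  simpa using htr
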